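/- The full HDG system admits at least one solution (U,B,T,P,R̂) ∈ 𝒱×𝒲×Z×Q×R. If moreover the smallness condition max{M₁,M₂,M₃}·(12ζ⁴(‖f₁‖+‖f₂‖+‖f₃‖) + 2ζ²·Pr·Re·‖f₃‖) < 1 holds, where ζ := max{Ha, Rm, Ha·Pr·Re·γ}, ‖f₁‖ := sup{f₁(v)/‖v‖ : 0 ≠ v ∈ V}, ‖f₂‖ := sup{f₂(w)/‖w‖ : 0 ≠ w ∈ W}, and ‖f₃‖ := sup{f₃(z)/‖z‖ : 0 ≠ z ∈ Z}, then this solution is unique. (Abstract finite-dimensional version of Theorem 4.1.) -/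

import Mathlib

lemma aux_det_poly {n : ℕ} (A : EuclideanSpace ℝ (Fin n) →L[ℝ] EuclideanSpace ℝ (Fin n)) :
    ∃ p : Polynomial ℝ, p.natDegree ≤ n ∧
      ∀ t : ℝ, p.eval t = (ContinuousLinearMap.id ℝ _ + t • A).det := by
  classical
  let b := (EuclideanSpace.basisFun (Fin n) ℝ).toBasis
  let M := LinearMap.toMatrix b b (A : EuclideanSpace ℝ (Fin n) →ₗ[ℝ] EuclideanSpace ℝ (Fin n))
  refine ⟨_, (Polynomial.natDegree_det_X_add_C_le M 1).trans (by simp), fun t => ?_⟩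
  rw [← Polynomial.coe_evalRingHom, RingHom.map_det, ContinuousLinearMap.det,
    ← LinearMap.det_toMatrix b]
  congr 1
  have : (LinearMap.toMatrix b b) ((ContinuousLinearMap.id ℝ (EuclideanSpace ℝ (Fin n)) + t • A :
      EuclideanSpace ℝ (Fin n) →L[ℝ] EuclideanSpace ℝ (Fin n)) :
      EuclideanSpace ℝ (Fin n) →ₗ[ℝ] EuclideanSpace ℝ (Fin n)) = 1 + t • M := by
    rw [ContinuousLinearMap.toLinearMap_add, ContinuousLinearMap.toLinearMap_smul, map_add,
      map_smul, ContinuousLinearMap.coe_id, LinearMap.toMatrix_id]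
  rw [this]
  ext i j
  by_cases hij : i = j
  · subst hij; simp; ring
  · simp [hij]; ring

lemma aux_lip_ext {E : Type*} [NormedAddCommGroup E] [NormedSpace ℝ E] {R : ℝ} {L : NNReal}
    {g : E → E} (hg : LipschitzOnWith L g (Metric.closedBall 0 R))
    (h0 : ∀ x, ‖x‖ = R → g x = 0) :
    ∃ g' : E → E, LipschitzWith L g' ∧ (∀ x, ‖x‖ ≤ R → g' x = g x) ∧
      ∀ x, R < ‖x‖ → g' x = 0 := by
  classical
  let g' : E → E := fun x => if ‖x‖ ≤ R then g x else 0
  have key : ∀ x y, ‖x‖ ≤ R → R < ‖y‖ → ‖g x‖ ≤ L * ‖x - y‖ := by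
    intro x y hx hy
    have hc : ContinuousOn (fun s : ℝ => ‖x + s • (y - x)‖) (Set.Icc 0 1) := by fun_prop
    have := intermediate_value_Icc (zero_le_one) hc
    obtain ⟨s, hs, hsR⟩ := this (show R ∈ Set.Icc _ _ by simp [hx, hy.le])
    simp only at hsR
    have h1 := hg.norm_sub_le (x := x) (y := x + s • (y - x)) (by simpa using hx)
      (by simpa using hsR.le)
    rw [h0 _ hsR, sub_zero] at h1
    refine h1.trans ?_
    gcongr
    rw [sub_add_cancel_left, norm_neg, norm_smul, Real.norm_of_nonneg hs.1, norm_sub_rev]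
    exact mul_le_of_le_one_left (norm_nonneg _) hs.2
  refine ⟨g', LipschitzWith.of_dist_le_mul fun x y => ?_, fun x hx => by simp [g', hx],
    fun x hx => by simp [g', not_le.2 hx]⟩
  rw [dist_eq_norm, dist_eq_norm]
  by_cases hx : ‖x‖ ≤ R <;> by_cases hy : ‖y‖ ≤ R
  · simp only [g', hx, hy, if_true]
    exact hg.norm_sub_le (by simpa using hx) (by simpa using hy)
  · simp only [g', hx, hy, if_true, if_false, sub_zero]
    exact key x y hx (not_le.1 hy)
  · simp only [g', hx, hy, if_true, if_false, zero_sub, norm_neg]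
    rw [norm_sub_rev]
    exact key y x hy (not_le.1 hx)
  · simp only [g', hx, hy, if_false, sub_zero, norm_zero]
    positivity

lemma aux_bij {E : Type*} [NormedAddCommGroup E] [NormedSpace ℝ E] [CompleteSpace E]
    {R : ℝ} {L : NNReal}
    {g : E → E} (hg : LipschitzOnWith L g (Metric.closedBall 0 R))
    (h0 : ∀ x, ‖x‖ = R → g x = 0) (hK : ∀ x, ‖x‖ ≤ R → ‖x + g x‖ ≤ R)
    {t : ℝ} (ht0 : 0 ≤ t) (ht1 : t < 1) (htL : t * L < 1) :
    Set.InjOn (fun x => x + t • g x) (Metric.ball 0 R) ∧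
    (fun x => x + t • g x) '' (Metric.ball 0 R) = Metric.ball 0 R := by
  obtain ⟨g', hg', he, ho⟩ := aux_lip_ext hg h0
  constructor
  · intro x hx y hy hxy
    simp only [mem_ball_zero_iff] at hx hy hxy
    have h1 := hg.norm_sub_le (x := x) (y := y) (by simpa using hx.le) (by simpa using hy.le)
    have h2 : x - y = - (t • (g x - g y)) := by
      rw [smul_sub]
      have : x = y + t • g y - t • g x := by rw [← hxy]; abel
      nth_rewrite 1 [this]; abel
    have h3 : ‖x - y‖ = t * ‖g x - g y‖ := by
      rw [h2, norm_neg, norm_smul, Real.norm_of_nonneg ht0]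
    by_contra hne
    have : 0 < ‖x - y‖ := norm_pos_iff.2 (sub_ne_zero.2 hne)
    nlinarith [mul_le_mul_of_nonneg_left h1 ht0]
  · apply Set.Subset.antisymm
    · rintro _ ⟨x, hx, rfl⟩
      simp only [mem_ball_zero_iff] at hx ⊢
      have : x + t • g x = (1 - t) • x + t • (x + g x) := by
        rw [sub_smul, smul_add, one_smul]; abel
      rw [this]
      calc _ ≤ ‖(1 - t) • x‖ + ‖t • (x + g x)‖ := norm_add_le _ _
        _ = (1 - t) * ‖x‖ + t * ‖x + g x‖ := by
          rw [norm_smul, norm_smul, Real.norm_of_nonneg ht0, Real.norm_of_nonneg (by linarith)]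
        _ < R := by nlinarith [mul_le_mul_of_nonneg_left (hK x hx.le) ht0]
    · intro y hy
      have hc : ContractingWith (Real.toNNReal t * L) (fun x => y - t • g' x) := by
        refine ⟨?_, ?_⟩
        · rw [← NNReal.coe_lt_coe]; simpa [ht0] using htL
        · refine LipschitzWith.of_dist_le_mul fun a b => ?_
          rw [dist_eq_norm, sub_sub_sub_cancel_left, ← smul_sub, norm_smul,
            Real.norm_of_nonneg ht0]
          have := hg'.norm_sub_le b a
          rw [dist_comm, dist_eq_norm]
          simp only [NNReal.coe_mul, Real.coe_toNNReal _ ht0, mul_assoc]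
          gcongr
      have hx := hc.fixedPoint_isFixedPt
      set x := ContractingWith.fixedPoint _ hc
      have hx' : y - t • g' x = x := hx
      have hy' : x + t • g' x = y := (sub_eq_iff_eq_add.1 hx').symm
      simp only [mem_ball_zero_iff] at hy
      have hxR : ‖x‖ < R := by
        by_contra hcon
        have : g' x = 0 := by
          rcases (not_lt.1 hcon).eq_or_lt with h | h
          · rw [he x h.symm.le, h0 x h.symm]
          · exact ho x h
        rw [this, smul_zero, add_zero] at hy'
        rw [hy'] at hcon
        exact hcon hy
      exact ⟨x, by simpa using hxR, by simpa only [← he x hxR.le] using hy'⟩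

open MeasureTheory in
lemma aux_no_retract {n : ℕ} {R : ℝ} (hR : 0 < R)
    (K : EuclideanSpace ℝ (Fin n) → EuclideanSpace ℝ (Fin n)) (hK : ContDiff ℝ 1 K)
    (hS : ∀ x, ‖x‖ = R → K x = x) (hN : ∀ x, ‖x‖ ≤ R → ‖K x‖ = R) : False := by
  let E := EuclideanSpace ℝ (Fin n)
  let g : E → E := fun x => K x - x
  have hg : ContDiff ℝ 1 g := hK.sub contDiff_id
  have hgK : ∀ x, x + g x = K x := fun x => by simp [g]
  obtain ⟨L, hL⟩ := hg.contDiffOn.exists_lipschitzOnWith one_ne_zero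
    (convex_closedBall (0 : E) R) (isCompact_closedBall 0 R)
  let A : E → E →L[ℝ] E := fun x => fderiv ℝ g x
  have hA : Continuous A := hg.continuous_fderiv one_ne_zero
  obtain ⟨C, hC⟩ := (isCompact_closedBall (0 : E) R).exists_bound_of_continuousOn hA.continuousOn
  have hC0 : 0 ≤ C := (norm_nonneg _).trans (hC 0 (by simp [hR.le]))
  have hdet : ∃ δ > 0, ∀ B : E →L[ℝ] E, ‖B‖ < δ → 0 < (ContinuousLinearMap.id ℝ E + B).det := by
    have hc : Continuous fun B : E →L[ℝ] E => (ContinuousLinearMap.id ℝ E + B).det :=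
      ContinuousLinearMap.continuous_det.comp (continuous_const.add continuous_id)
    have h0 : (0:ℝ) < (ContinuousLinearMap.id ℝ E + 0).det := by
      simp [ContinuousLinearMap.det]
    have := hc.continuousAt.eventually (lt_mem_nhds h0)
    obtain ⟨δ, hδ, h⟩ := Metric.eventually_nhds_iff.1 this
    exact ⟨δ, hδ, fun B hB => h (by simpa using hB)⟩
  obtain ⟨δ, hδ, hdet⟩ := hdet
  obtain ⟨t0, ht0, ht1, htL, htC⟩ : ∃ t0 : ℝ, 0 < t0 ∧ t0 < 1 ∧ t0 * L < 1 ∧ t0 * C < δ := by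
    have hL0 : (0:ℝ) ≤ L := L.2
    refine ⟨min (1 / (L + 2)) (δ / (C + 1)), by positivity, ?_, ?_, ?_⟩
    · refine (min_le_left _ _).trans_lt ?_
      rw [div_lt_one (by positivity)]; linarith
    · calc _ ≤ 1 / (L + 2) * (L : ℝ) := by gcongr; exact min_le_left _ _
        _ < 1 := by rw [div_mul_eq_mul_div, div_lt_one (by positivity)]; linarith
    · calc _ ≤ δ / (C + 1) * C := by gcongr; exact min_le_right _ _
        _ < δ := by rw [div_mul_eq_mul_div, div_lt_iff₀ (by positivity)]; nlinarith
  have main : ∀ t, 0 < t → t ≤ t0 →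
      ∫ x in Metric.ball (0:E) R, (ContinuousLinearMap.id ℝ E + t • A x).det =
        (volume (Metric.ball (0:E) R)).toReal := by
    intro t h0 hle
    obtain ⟨hinj, himg⟩ := aux_bij hL (fun x hx => by simp [g, hS x hx])
      (fun x hx => by rw [hgK, hN x hx]) h0.le (hle.trans_lt ht1)
      ((mul_le_mul_of_nonneg_right hle L.2).trans_lt htL)
    have := integral_image_eq_integral_abs_det_fderiv_smul (volume : Measure E)
      (s := Metric.ball (0:E) R) (f := fun x => x + t • g x)
      (f' := fun x => ContinuousLinearMap.id ℝ E + t • A x) Metric.isOpen_ball.measurableSet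
      (fun x _ => (((hasFDerivAt_id x).add
        (((hg.differentiable one_ne_zero) x).hasFDerivAt.const_smul t))).hasFDerivWithinAt)
      hinj (fun _ => (1:ℝ))
    rw [himg] at this
    simp only [smul_eq_mul, mul_one, integral_const, measureReal_restrict_apply_univ] at this
    rw [← Measure.real, this]
    refine setIntegral_congr_fun Metric.isOpen_ball.measurableSet fun x hx => ?_
    refine (abs_of_pos (hdet _ ?_)).symm
    rw [norm_smul, Real.norm_of_nonneg h0.le]
    exact (mul_le_mul hle (hC x (Metric.ball_subset_closedBall hx)) (norm_nonneg _) ht0.le).trans_lt htC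
  let v : ℕ → ℝ := fun j => t0 / (j + 1)
  have hv : Set.InjOn v (Finset.range (n+1) : Finset ℕ) := by
    intro i _ j _ hij
    simp only [v] at hij
    have hi : (i:ℝ) + 1 ≠ 0 := by positivity
    have hj : (j:ℝ) + 1 ≠ 0 := by positivity
    field_simp at hij
    have : (i:ℝ) = j := by linarith
    exact_mod_cast this
  let c : ℕ → ℝ := fun j => (Lagrange.basis (Finset.range (n+1)) v j).eval 1
  have hcsum : ∑ j ∈ Finset.range (n+1), c j = 1 := by
    have := congrArg (Polynomial.eval 1) (Lagrange.sum_basis hv (by simp))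
    simpa [Polynomial.eval_finsetSum] using this
  have hpt : ∀ x, (ContinuousLinearMap.id ℝ E + (1:ℝ) • A x).det =
      ∑ j ∈ Finset.range (n+1), (ContinuousLinearMap.id ℝ E + v j • A x).det * c j := by
    intro x
    obtain ⟨p, hp, hpe⟩ := aux_det_poly (A x)
    have hdeg : p.degree < ((Finset.range (n+1)).card : ℕ) := by
      refine (Polynomial.degree_le_of_natDegree_le hp).trans_lt ?_
      rw [Finset.card_range]; exact_mod_cast Nat.lt_succ_self n
    have := congrArg (Polynomial.eval 1) (Lagrange.eq_interpolate hv hdeg)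
    rw [← hpe 1, this, Lagrange.interpolate_apply, Polynomial.eval_finsetSum]
    refine Finset.sum_congr rfl fun j _ => ?_
    rw [Polynomial.eval_mul, Polynomial.eval_C, hpe]
  have hzero : ∀ x ∈ Metric.ball (0:E) R, (ContinuousLinearMap.id ℝ E + (1:ℝ) • A x).det = 0 := by
    intro x hx
    have hAx : ContinuousLinearMap.id ℝ E + (1:ℝ) • A x = fderiv ℝ K x := by
      have : A x = fderiv ℝ K x - ContinuousLinearMap.id ℝ E :=
        (((hK.differentiable one_ne_zero) x).hasFDerivAt.sub (hasFDerivAt_id x)).fderiv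
      rw [this]; simp
    rw [hAx]
    by_contra hne
    have hd := ((hK.differentiable one_ne_zero) x).hasFDerivAt
    have h1 := hd.norm_sq
    have h2 : HasFDerivAt (fun y => ‖K y‖ ^ 2) (0 : E →L[ℝ] ℝ) x := by
      refine (hasFDerivAt_const (R ^ 2) x).congr_of_eventuallyEq ?_
      filter_upwards [Metric.isOpen_ball.mem_nhds hx] with y hy
      rw [hN y (by simpa using (Metric.ball_subset_closedBall hy))]
    have h3 := h1.unique h2
    obtain ⟨w, hw⟩ : ∃ w, fderiv ℝ K x w = K x := by
      have hu : IsUnit (LinearMap.det (fderiv ℝ K x : E →ₗ[ℝ] E)) := isUnit_iff_ne_zero.2 hne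
      exact (LinearMap.equivOfDetNeZero _ hne).surjective (K x)
    have h4 := congrArg (fun l : E →L[ℝ] ℝ => l w) h3
    simp [hw] at h4
    have := hN x (by simpa using (Metric.ball_subset_closedBall hx))
    rw [h4] at this
    simp at this
    exact hR.ne this
  have hint : ∀ t : ℝ, IntegrableOn (fun x => (ContinuousLinearMap.id ℝ E + t • A x).det)
      (Metric.ball (0:E) R) := by
    intro t
    have : Continuous (fun x => (ContinuousLinearMap.id ℝ E + t • A x).det) :=
      ContinuousLinearMap.continuous_det.comp (continuous_const.add (hA.const_smul t))
    exact (this.continuousOn.integrableOn_compact (isCompact_closedBall (0:E) R)).mono_set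
      Metric.ball_subset_closedBall
  have e1 : ∫ x in Metric.ball (0:E) R, (ContinuousLinearMap.id ℝ E + (1:ℝ) • A x).det = 0 := by
    rw [setIntegral_congr_fun Metric.isOpen_ball.measurableSet hzero]; simp
  simp_rw [hpt] at e1
  rw [integral_finsetSum _ (fun j _ => (hint (v j)).mul_const (c j))] at e1
  simp_rw [integral_mul_const] at e1
  have e2 : ∀ j ∈ Finset.range (n+1),
      (∫ x in Metric.ball (0:E) R, (ContinuousLinearMap.id ℝ E + v j • A x).det) * c j =
      (volume (Metric.ball (0:E) R)).toReal * c j := by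
    intro j _
    rw [main (v j) (by positivity) (div_le_self ht0.le (by simp))]
  rw [Finset.sum_congr rfl e2, ← Finset.mul_sum, hcsum, mul_one] at e1
  have := ENNReal.toReal_pos (Metric.measure_ball_pos volume (0:E) hR).ne' measure_ball_lt_top.ne
  linarith

lemma aux_zero {n : ℕ} (F : EuclideanSpace ℝ (Fin n) → EuclideanSpace ℝ (Fin n))
    (hF : ContDiff ℝ 1 F) {r : ℝ} (hr : 0 < r) (h : ∀ x, r ≤ ‖x‖ → 0 < inner ℝ (F x) x) :
    ∃ x, F x = 0 := by
  by_contra! hne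
  let E := EuclideanSpace ℝ (Fin n)
  let χ : E → ℝ := fun x => Real.smoothTransition (‖x‖ ^ 2 / r ^ 2 - 1)
  have hχ : ContDiff ℝ 1 χ :=
    Real.smoothTransition.contDiff.comp (((contDiff_norm_sq ℝ).div_const _).sub contDiff_const)
  let H : E → E := fun x => (1 - χ x) • F x + χ x • x
  have hH : ContDiff ℝ 1 H := ((contDiff_const.sub hχ).smul hF).add (hχ.smul contDiff_id)
  have hH0 : ∀ x, H x ≠ 0 := by
    intro x hx
    rcases lt_or_ge ‖x‖ r with hlt | hge
    · have : χ x = 0 := by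
        apply Real.smoothTransition.zero_of_nonpos
        rw [sub_nonpos, div_le_one (by positivity)]
        gcongr
      simp [H, this, hne] at hx
    · have h1 : inner ℝ (H x) x = 0 := by rw [hx]; simp
      have h2 : inner ℝ (H x) x = (1 - χ x) * inner ℝ (F x) x + χ x * ‖x‖ ^ 2 := by
        simp only [H, inner_add_left, real_inner_smul_left, real_inner_self_eq_norm_sq]
      have h3 : 0 ≤ χ x := Real.smoothTransition.nonneg _
      have h4 : χ x ≤ 1 := Real.smoothTransition.le_one _
      have h5 := h x hge
      have h6 : 0 < ‖x‖ ^ 2 := by have := hr.trans_le hge; positivity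
      rcases h3.eq_or_lt with h7 | h7
      · rw [h1, ← h7] at h2; linarith
      · have := mul_pos h7 h6
        have := mul_nonneg (sub_nonneg.2 h4) h5.le
        linarith
  let R : ℝ := 2 * r
  have hR : 0 < R := by positivity
  refine aux_no_retract hR (fun x => (R / ‖H x‖) • H x) ?_ ?_ ?_
  · exact (contDiff_const.div (hH.norm ℝ hH0) (fun x => norm_ne_zero_iff.2 (hH0 x))).smul hH
  · intro x hx
    have : χ x = 1 := by
      apply Real.smoothTransition.one_of_one_le
      rw [le_sub_iff_add_le, le_div_iff₀ (by positivity), hx]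
      simp only [R]; nlinarith [sq_nonneg r]
    simp [H, this, hx, hR.ne']
  · intro x _
    rw [norm_smul, norm_div, norm_norm, div_mul_cancel₀ _ (norm_ne_zero_iff.2 (hH0 x)),
      Real.norm_of_nonneg hR.le]

lemma aux_zero' {E : Type*} [NormedAddCommGroup E] [NormedSpace ℝ E] [FiniteDimensional ℝ E]
    (N : E → E →ₗ[ℝ] ℝ) (hN : ∀ v, ContDiff ℝ 1 (fun x => N x v)) {r : ℝ} (hr : 0 < r)
    (h : ∀ x, r ≤ ‖x‖ → 0 < N x x) : ∃ x, N x = 0 := by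
  let n := Module.finrank ℝ E
  let e : EuclideanSpace ℝ (Fin n) ≃L[ℝ] E :=
    ContinuousLinearEquiv.ofFinrankEq (by simp [n])
  let b := (EuclideanSpace.basisFun (Fin n) ℝ)
  have hNb : ∀ (x : E) (y : EuclideanSpace ℝ (Fin n)),
      inner ℝ (WithLp.toLp 2 (fun i => N x (e (b i))) : EuclideanSpace ℝ (Fin n)) y = N x (e y) := by
    intro x y
    have : y = ∑ i, y i • b i := by
      simpa [b] using (b.sum_repr y).symm
    conv_rhs => rw [this]
    simp [PiLp.inner_apply]
  obtain ⟨y, hy⟩ := aux_zero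
    (fun y => (WithLp.toLp 2 (fun i => N (e y) (e (b i))) : EuclideanSpace ℝ (Fin n)))
    (by
      rw [contDiff_euclidean]
      intro i
      exact (hN (e (b i))).comp e.contDiff)
    (r := r * (‖(e.symm : E →L[ℝ] EuclideanSpace ℝ (Fin n))‖ + 1)) (by positivity)
    (by
      intro y hy
      rw [hNb]
      apply h
      have h1 : ‖y‖ ≤ ‖(e.symm : E →L[ℝ] EuclideanSpace ℝ (Fin n))‖ * ‖e y‖ := by
        simpa using (e.symm : E →L[ℝ] EuclideanSpace ℝ (Fin n)).le_opNorm (e y)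
      have h2 := norm_nonneg (e.symm : E →L[ℝ] EuclideanSpace ℝ (Fin n))
      by_contra! hcon
      nlinarith [norm_nonneg (e y)])
  refine ⟨e y, ?_⟩
  ext z
  have := hNb (e y) (e.symm z)
  rw [hy] at this
  simpa using this.symm

lemma aux_bil {X Y D : Type*} [NormedAddCommGroup X] [NormedSpace ℝ X] [FiniteDimensional ℝ X]
    [NormedAddCommGroup Y] [NormedSpace ℝ Y] [FiniteDimensional ℝ Y]
    [NormedAddCommGroup D] [NormedSpace ℝ D] (B : X →ₗ[ℝ] Y →ₗ[ℝ] ℝ) {f : D → X} {g : D → Y}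
    (hf : ContDiff ℝ 1 f) (hg : ContDiff ℝ 1 g) : ContDiff ℝ 1 (fun x => B (f x) (g x)) :=
  (B.toContinuousBilinearMap.contDiff.comp hf).clm_apply hg

lemma aux_sup {X : Type*} [NormedAddCommGroup X] [NormedSpace ℝ X] (f : X →L[ℝ] ℝ)
    (P : X → Prop) (hP : ∀ v, P v → P (-v)) (m : ℝ)
    (hm : m = sSup {r : ℝ | ∃ v : X, P v ∧ v ≠ 0 ∧ r = f v / ‖v‖}) :
    0 ≤ m ∧ ∀ v, P v → f v ≤ m * ‖v‖ := by
  have hb : BddAbove {r : ℝ | ∃ v : X, P v ∧ v ≠ 0 ∧ r = f v / ‖v‖} := by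
    refine ⟨‖f‖, ?_⟩
    rintro r ⟨v, -, hv, rfl⟩
    rw [div_le_iff₀ (norm_pos_iff.2 hv)]
    exact (le_abs_self _).trans (f.le_opNorm v)
  have h2 : ∀ v, P v → v ≠ 0 → f v ≤ m * ‖v‖ := by
    intro v hv hv0
    rw [← div_le_iff₀ (norm_pos_iff.2 hv0), hm]
    exact le_csSup hb ⟨v, hv, hv0, rfl⟩
  refine ⟨?_, fun v hv => ?_⟩
  · by_cases h : ∃ v, P v ∧ v ≠ 0
    · obtain ⟨v, hv, hv0⟩ := h
      have h3 := h2 v hv hv0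
      have h4 := h2 (-v) (hP v hv) (neg_ne_zero.2 hv0)
      rw [norm_neg, map_neg] at h4
      have := norm_pos_iff.2 hv0
      by_contra! hcon
      nlinarith
    · have : {r : ℝ | ∃ v : X, P v ∧ v ≠ 0 ∧ r = f v / ‖v‖} = ∅ := by
        ext r
        simp only [Set.mem_ofPred_eq, Set.mem_empty_iff_false, iff_false]
        rintro ⟨v, hv, hv0, -⟩
        exact h ⟨v, hv, hv0⟩
      rw [hm, this, Real.sSup_empty]
  · by_cases hv0 : v = 0
    · simp [hv0]
    · exact h2 v hv hv0

lemma aux_inj {X Y : Type*} [NormedAddCommGroup X] [NormedSpace ℝ X]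
    [NormedAddCommGroup Y] [NormedSpace ℝ Y] (b : X →ₗ[ℝ] Y →ₗ[ℝ] ℝ) {β : ℝ} (hβ : 0 < β)
    (h : ∀ q : Y, β * ‖q‖ ≤ sSup {r : ℝ | ∃ v : X, v ≠ 0 ∧ r = b v q / ‖v‖})
    (p q : Y) (hpq : ∀ v, b v p = b v q) : p = q := by
  have h1 : sSup {r : ℝ | ∃ v : X, v ≠ 0 ∧ r = b v (p - q) / ‖v‖} ≤ 0 := by
    apply Real.sSup_nonpos
    rintro r ⟨v, -, rfl⟩
    simp [hpq]
  have h2 := (h (p - q)).trans h1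
  have h3 : ‖p - q‖ = 0 := by
    have := norm_nonneg (p - q)
    nlinarith
  exact sub_eq_zero.1 (norm_eq_zero.1 h3)

lemma aux_pressure {X Y : Type*} [AddCommGroup X] [Module ℝ X]
    [AddCommGroup Y] [Module ℝ Y] [FiniteDimensional ℝ Y] (b : X →ₗ[ℝ] Y →ₗ[ℝ] ℝ)
    (l : X →ₗ[ℝ] ℝ) (hl : ∀ v, (∀ q, b v q = 0) → l v = 0) : ∃ p, ∀ v, b v p = l v := by
  have : l ∈ b.ker.dualAnnihilator := by
    rw [Submodule.mem_dualAnnihilator]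
    intro v hv
    exact hl v (fun q => by rw [LinearMap.mem_ker.1 hv]; rfl)
  rw [LinearMap.dualAnnihilator_ker_eq_range_flip] at this
  obtain ⟨p, hp⟩ := this
  exact ⟨p, fun v => by rw [← hp]; rfl⟩

lemma aux_real1 {x y a d : ℝ} (hx : 0 ≤ x) (hy : 0 ≤ y) (ha : 0 ≤ a) (hd : 0 ≤ d)
    (h : x ^ 2 + y ^ 2 ≤ a * x + d * y) : x ≤ a + d ∧ y ≤ a + d := by
  constructor
  · by_contra! hc
    nlinarith [sq_nonneg (y - d / 2), mul_pos (show 0 < x by linarith) (sub_pos.2 hc), mul_nonneg ha hd]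
  · by_contra! hc
    nlinarith [sq_nonneg (x - a / 2), mul_pos (show 0 < y by linarith) (sub_pos.2 hc), mul_nonneg ha hd]

lemma aux_real2 {Ha Rm Pr Re γ ζ n1 n2 n3 u b t : ℝ} (hHa : 0 < Ha) (hRm : 0 < Rm)
    (h1 : Ha ≤ ζ) (h2 : Rm ≤ ζ) (h3 : Ha * Pr * Re * γ ≤ ζ) (hγ : 0 < γ)
    (hn1 : 0 ≤ n1) (hn2 : 0 ≤ n2) (hn3 : 0 ≤ n3) (hu : 0 ≤ u) (hb : 0 ≤ b)
    (ht : t ≤ Pr * Re * n3)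
    (h : Ha⁻¹ ^ 2 * u ^ 2 + Rm⁻¹ ^ 2 * b ^ 2 ≤ n1 * u + n2 * b + γ * t * u) :
    u ≤ ζ ^ 2 * (n1 + n2 + n3) ∧ b ≤ ζ ^ 2 * (n1 + n2 + n3) := by
  have hζ : 0 < ζ := hHa.trans_le h1
  obtain ⟨x, rfl⟩ : ∃ x, u = Ha * x := ⟨u / Ha, by field_simp⟩
  obtain ⟨y, rfl⟩ : ∃ y, b = Rm * y := ⟨b / Rm, by field_simp⟩
  have hx : 0 ≤ x := nonneg_of_mul_nonneg_right hu hHa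
  have hy : 0 ≤ y := nonneg_of_mul_nonneg_right hb hRm
  have e : Ha⁻¹ ^ 2 * (Ha * x) ^ 2 + Rm⁻¹ ^ 2 * (Rm * y) ^ 2 = x ^ 2 + y ^ 2 := by field_simp
  rw [e] at h
  have k1 : n1 * (Ha * x) ≤ ζ * n1 * x := by
    have := mul_le_mul_of_nonneg_right h1 (mul_nonneg hn1 hx); linarith
  have k2 : n2 * (Rm * y) ≤ ζ * n2 * y := by
    have := mul_le_mul_of_nonneg_right h2 (mul_nonneg hn2 hy); linarith
  have k3 : γ * t * (Ha * x) ≤ ζ * n3 * x := by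
    have a1 := mul_le_mul_of_nonneg_right h3 (mul_nonneg hn3 hx)
    have a2 := mul_le_mul_of_nonneg_right ht (mul_nonneg hγ.le (mul_nonneg hHa.le hx))
    linarith
  obtain ⟨r1, r2⟩ := aux_real1 (a := ζ * (n1 + n3)) (d := ζ * n2) hx hy (by positivity)
    (by positivity) (by linarith)
  constructor
  · calc Ha * x ≤ ζ * (ζ * (n1 + n3) + ζ * n2) := by gcongr
      _ = _ := by ring
  · calc Rm * y ≤ ζ * (ζ * (n1 + n3) + ζ * n2) := by gcongr
      _ = _ := by ring

lemma aux_real3 {Ha Rm Pr Re γ ζ N n3 M u b U B U' t : ℝ} (hHa : 0 < Ha) (hRm : 0 < Rm)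
    (hPr : 0 < Pr) (hRe : 0 < Re)
    (h1 : Ha ≤ ζ) (h2 : Rm ≤ ζ) (h3 : Ha * Pr * Re * γ ≤ ζ) (hγ : 0 < γ)
    (hN : 0 ≤ N) (hn3 : 0 ≤ n3) (hM : 0 ≤ M) (hu : 0 ≤ u) (hb : 0 ≤ b)
    (hU : U ≤ ζ ^ 2 * N) (hB : B ≤ ζ ^ 2 * N) (hU' : U' ≤ ζ ^ 2 * N)
    (ht : t ≤ (Pr * Re) ^ 2 * M * n3 * u)
    (hs : M * (12 * ζ ^ 4 * N + 2 * ζ ^ 2 * Pr * Re * n3) < 1)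
    (h : Ha⁻¹ ^ 2 * u ^ 2 + Rm⁻¹ ^ 2 * b ^ 2 ≤
      M * u * U * u + M * u * b * B + M * U' * b * b + γ * t * u) : u = 0 ∧ b = 0 := by
  have hζ : 0 < ζ := hHa.trans_le h1
  obtain ⟨x, rfl⟩ : ∃ x, u = Ha * x := ⟨u / Ha, by field_simp⟩
  obtain ⟨y, rfl⟩ : ∃ y, b = Rm * y := ⟨b / Rm, by field_simp⟩
  have hx : 0 ≤ x := nonneg_of_mul_nonneg_right hu hHa
  have hy : 0 ≤ y := nonneg_of_mul_nonneg_right hb hRm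
  have e : Ha⁻¹ ^ 2 * (Ha * x) ^ 2 + Rm⁻¹ ^ 2 * (Rm * y) ^ 2 = x ^ 2 + y ^ 2 := by field_simp
  rw [e] at h
  have hP : 0 ≤ ζ ^ 2 * N := by positivity
  have k1 : M * (Ha * x) * U * (Ha * x) ≤ M * (ζ * x) * (ζ ^ 2 * N) * (ζ * x) := by
    calc _ ≤ M * (Ha * x) * (ζ ^ 2 * N) * (Ha * x) := by gcongr
      _ ≤ _ := by gcongr
  have k2 : M * (Ha * x) * (Rm * y) * B ≤ M * (ζ * x) * (ζ * y) * (ζ ^ 2 * N) := by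
    calc _ ≤ M * (Ha * x) * (Rm * y) * (ζ ^ 2 * N) := by gcongr
      _ ≤ _ := by gcongr
  have k3 : M * U' * (Rm * y) * (Rm * y) ≤ M * (ζ ^ 2 * N) * (ζ * y) * (ζ * y) := by
    calc _ ≤ M * (ζ ^ 2 * N) * (Rm * y) * (Rm * y) := by gcongr
      _ ≤ _ := by gcongr
  have k4 : γ * t * (Ha * x) ≤ M * ζ ^ 2 * Pr * Re * n3 * x ^ 2 := by
    calc _ ≤ γ * ((Pr * Re) ^ 2 * M * n3 * (Ha * x)) * (Ha * x) := by gcongr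
      _ = (Ha * Pr * Re * γ) * Ha * (M * Pr * Re * n3 * x ^ 2) := by ring
      _ ≤ ζ * ζ * (M * Pr * Re * n3 * x ^ 2) := by gcongr
      _ = _ := by ring
  obtain ⟨θ, hθ⟩ : ∃ θ, θ = M * ζ ^ 4 * N := ⟨_, rfl⟩
  obtain ⟨η, hη⟩ : ∃ η, η = M * ζ ^ 2 * Pr * Re * n3 := ⟨_, rfl⟩
  have hθ0 : 0 ≤ θ := by rw [hθ]; positivity
  have hη0 : 0 ≤ η := by rw [hη]; positivity
  have hs' : 12 * θ + 2 * η < 1 := by rw [hθ, hη]; linarith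
  have hh : x ^ 2 + y ^ 2 ≤ θ * (x ^ 2 + x * y + y ^ 2) + η * x ^ 2 := by
    rw [← hη] at k4
    have : θ * (x ^ 2 + x * y + y ^ 2) = M * (ζ * x) * (ζ ^ 2 * N) * (ζ * x) +
      M * (ζ * x) * (ζ * y) * (ζ ^ 2 * N) + M * (ζ ^ 2 * N) * (ζ * y) * (ζ * y) := by
      rw [hθ]; ring
    linarith
  have h5 : θ * (x ^ 2 + x * y + y ^ 2) ≤ θ * (2 * (x ^ 2 + y ^ 2)) := by
    gcongr; nlinarith [sq_nonneg (x - y)]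
  have h6 : x ^ 2 + y ^ 2 = 0 := by
    have a1 : η * x ^ 2 ≤ η * (x ^ 2 + y ^ 2) := by gcongr; linarith [sq_nonneg y]
    have a2 : 0 ≤ x ^ 2 + y ^ 2 := by positivity
    by_contra hne
    have a3 : 0 < x ^ 2 + y ^ 2 := lt_of_le_of_ne a2 (Ne.symm hne)
    have : (2 * θ + η) * (x ^ 2 + y ^ 2) < 1 * (x ^ 2 + y ^ 2) :=
      mul_lt_mul_of_pos_right (by linarith) a3
    linarith
  have hx0 : x = 0 := by
    have : x ^ 2 = 0 := le_antisymm (by linarith [sq_nonneg y]) (sq_nonneg x)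
    exact pow_eq_zero_iff (two_ne_zero) |>.1 this
  have hy0 : y = 0 := by
    have : y ^ 2 = 0 := le_antisymm (by linarith [sq_nonneg x]) (sq_nonneg y)
    exact pow_eq_zero_iff (two_ne_zero) |>.1 this
  simp [hx0, hy0]

lemma aux_div {k x y : ℝ} (hk : 0 < k) (hx : 0 ≤ x) (hy : 0 ≤ y)
    (h : k⁻¹ * x ^ 2 ≤ y * x) : x ≤ k * y := by
  rcases hx.eq_or_lt with h0 | h0
  · rw [← h0]; positivity
  · rw [inv_mul_le_iff₀ hk] at h
    have : x * x ≤ (k * y) * x := by linarith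
    exact le_of_mul_le_mul_right this h0

lemma aux_coer {p q γ D₁ D₂ D₃ u b t m A g : ℝ} (hp : 0 < p) (hq : 0 < q) (hγ : 0 < γ)
    (hD₁ : 0 ≤ D₁) (hD₂ : 0 ≤ D₂) (hD₃ : 0 ≤ D₃)
    (hu : 0 ≤ u) (hb : 0 ≤ b) (ht : 0 ≤ t) (hum : u ≤ m) (hbm : b ≤ m) (htm : t ≤ m)
    (hm : m = u ∨ m = b ∨ m = t)
    (hr : (D₁ + D₂ + D₃) / min (min (p / 2) q) (γ ^ 2 / (2 * p)) + 1 ≤ m)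
    (hg : -g ≤ γ * t * u)
    (h : p * u ^ 2 + q * b ^ 2 + γ ^ 2 / p * t ^ 2 + g - D₁ * u - D₂ * b - D₃ * t ≤ A) :
    0 < A := by
  set α := min (min (p / 2) q) (γ ^ 2 / (2 * p)) with hα
  have hα0 : 0 < α := by positivity
  have ha1 : α ≤ p / 2 := (min_le_left _ _).trans (min_le_left _ _)
  have ha2 : α ≤ q := (min_le_left _ _).trans (min_le_right _ _)
  have ha3 : α ≤ γ ^ 2 / (2 * p) := min_le_right _ _
  have k1 : α * u ^ 2 ≤ p / 2 * u ^ 2 := by gcongr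
  have k2 : α * b ^ 2 ≤ q * b ^ 2 := by gcongr
  have k3 : α * t ^ 2 ≤ γ ^ 2 / (2 * p) * t ^ 2 := by gcongr
  have k4 : γ * t * u ≤ p / 2 * u ^ 2 + γ ^ 2 / (2 * p) * t ^ 2 := by
    have : p / 2 * u ^ 2 + γ ^ 2 / (2 * p) * t ^ 2 - γ * t * u = (p * u - γ * t) ^ 2 / (2 * p) := by
      field_simp; ring
    have h2 : 0 ≤ (p * u - γ * t) ^ 2 / (2 * p) := by positivity
    linarith
  have k5 : γ ^ 2 / p * t ^ 2 = 2 * (γ ^ 2 / (2 * p) * t ^ 2) := by field_simp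
  have k6 : α * m ^ 2 ≤ α * u ^ 2 + α * b ^ 2 + α * t ^ 2 := by
    have a1 : 0 ≤ α * u ^ 2 := by positivity
    have a2 : 0 ≤ α * b ^ 2 := by positivity
    have a3 : 0 ≤ α * t ^ 2 := by positivity
    rcases hm with h | h | h <;> rw [h] <;> linarith
  have hm0 : 0 < m := by
    have : 0 ≤ (D₁ + D₂ + D₃) / α := by positivity
    linarith
  have k7 : D₁ + D₂ + D₃ < α * m := by
    have : (D₁ + D₂ + D₃) / α < m := by linarith
    rwa [div_lt_iff₀' hα0] at this
  have k8 := mul_lt_mul_of_pos_right k7 hm0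
  have l1 := mul_le_mul_of_nonneg_left hum hD₁
  have l2 := mul_le_mul_of_nonneg_left hbm hD₂
  have l3 := mul_le_mul_of_nonneg_left htm hD₃
  linarith

lemma aux_exists
    {𝒱 𝒲 Z Q R : Type*}
    [NormedAddCommGroup 𝒱] [InnerProductSpace ℝ 𝒱] [FiniteDimensional ℝ 𝒱]
    [NormedAddCommGroup 𝒲] [InnerProductSpace ℝ 𝒲] [FiniteDimensional ℝ 𝒲]
    [NormedAddCommGroup Z] [InnerProductSpace ℝ Z] [FiniteDimensional ℝ Z]
    [NormedAddCommGroup Q] [NormedSpace ℝ Q] [FiniteDimensional ℝ Q]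
    [NormedAddCommGroup R] [NormedSpace ℝ R] [FiniteDimensional ℝ R]
    (Ha Rm Pr Re γ : ℝ)
    (hHa : 0 < Ha) (hRm : 0 < Rm) (hPr : 0 < Pr) (hRe : 0 < Re) (hγ : 0 < γ)
    (b₁ : 𝒱 →ₗ[ℝ] Q →ₗ[ℝ] ℝ) (b₂ : 𝒲 →ₗ[ℝ] R →ₗ[ℝ] ℝ)
    (aV : 𝒱 →ₗ[ℝ] 𝒱 →ₗ[ℝ] ℝ) (aW : 𝒲 →ₗ[ℝ] 𝒲 →ₗ[ℝ] ℝ) (aZ : Z →ₗ[ℝ] Z →ₗ[ℝ] ℝ)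
    (haV_coer : ∀ v : 𝒱, Ha⁻¹ ^ 2 * ‖v‖ ^ 2 ≤ aV v v)
    (haW_coer : ∀ w : 𝒲, Rm⁻¹ ^ 2 * ‖w‖ ^ 2 ≤ aW w w)
    (haZ_coer : ∀ z : Z, (Pr * Re)⁻¹ * ‖z‖ ^ 2 ≤ aZ z z)
    (c₁ : 𝒱 →ₗ[ℝ] 𝒱 →ₗ[ℝ] 𝒱 →ₗ[ℝ] ℝ)
    (c₂ : 𝒱 →ₗ[ℝ] 𝒲 →ₗ[ℝ] 𝒲 →ₗ[ℝ] ℝ)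
    (c₃ : 𝒱 →ₗ[ℝ] Z →ₗ[ℝ] Z →ₗ[ℝ] ℝ)
    (hc₁_skew : ∀ (φ v : 𝒱), c₁ φ v v = 0)
    (hc₃_skew : ∀ (u : 𝒱) (z : Z), c₃ u z z = 0)
    (G : Z →ₗ[ℝ] 𝒱 →ₗ[ℝ] ℝ)
    (hG_bound : ∀ (T : Z) (v : 𝒱), |G T v| ≤ γ * ‖T‖ * ‖v‖)
    (f₁ : 𝒱 →L[ℝ] ℝ) (f₂ : 𝒲 →L[ℝ] ℝ) (f₃ : Z →L[ℝ] ℝ) :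
    ∃ ubtpr : 𝒱 × 𝒲 × Z × Q × R,
      (∀ (v : 𝒱) (w : 𝒲),
        aV ubtpr.1 v + aW ubtpr.2.1 w + b₁ v ubtpr.2.2.2.1 + b₂ w ubtpr.2.2.2.2
            + c₁ ubtpr.1 ubtpr.1 v + c₂ v ubtpr.2.1 ubtpr.2.1
            - c₂ ubtpr.1 ubtpr.2.1 w
          = f₁ v + f₂ w - G ubtpr.2.2.1 v) ∧
      (∀ q : Q, b₁ ubtpr.1 q = 0) ∧
      (∀ θ : R, b₂ ubtpr.2.1 θ = 0) ∧
      (∀ z : Z, aZ ubtpr.2.2.1 z + c₃ ubtpr.1 ubtpr.2.2.1 z = f₃ z) := by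
  have hPR : 0 < Pr * Re := mul_pos hPr hRe
  let p : ℝ := Ha⁻¹ ^ 2
  have hp : 0 < p := by positivity
  let q : ℝ := Rm⁻¹ ^ 2
  have hq : 0 < q := by positivity
  let l : ℝ := γ ^ 2 / p * (Pr * Re)
  have hl : 0 < l := by positivity
  let V := LinearMap.ker b₁
  let W := LinearMap.ker b₂
  let ℓ₁ : 𝒱 → 𝒲 → Z → 𝒱 →ₗ[ℝ] ℝ := fun u b T =>
    aV u + c₁ u u + (c₂.flip b).flip b + G T - (f₁ : 𝒱 →ₗ[ℝ] ℝ)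
  let ℓ₂ : 𝒱 → 𝒲 → 𝒲 →ₗ[ℝ] ℝ := fun u b => aW b - c₂ u b - (f₂ : 𝒲 →ₗ[ℝ] ℝ)
  let ℓ₃ : 𝒱 → Z → Z →ₗ[ℝ] ℝ := fun u T => aZ T + c₃ u T - (f₃ : Z →ₗ[ℝ] ℝ)
  let N : (V × W × Z) → (V × W × Z) →ₗ[ℝ] ℝ := fun x =>
    (ℓ₁ x.1 x.2.1 x.2.2 ∘ₗ V.subtype).coprod
      ((ℓ₂ x.1 x.2.1 ∘ₗ W.subtype).coprod (l • ℓ₃ x.1 x.2.2))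
  have hN : ∀ x y, N x y = ℓ₁ x.1 x.2.1 x.2.2 y.1 + (ℓ₂ x.1 x.2.1 y.2.1 + l * ℓ₃ x.1 x.2.2 y.2.2) :=
    fun x y => rfl
  have h1 : ∀ u b T v, ℓ₁ u b T v = aV u v + c₁ u u v + c₂ v b b + G T v - f₁ v :=
    fun _ _ _ _ => rfl
  have h2 : ∀ u b w, ℓ₂ u b w = aW b w - c₂ u b w - f₂ w := fun _ _ _ => rfl
  have h3 : ∀ u T z, ℓ₃ u T z = aZ T z + c₃ u T z - f₃ z := fun _ _ _ => rfl
  have hex : ∃ x, N x = 0 := by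
    refine aux_zero' N ?_
      (r := (‖f₁‖ + ‖f₂‖ + l * ‖f₃‖) / min (min (p / 2) q) (γ ^ 2 / (2 * p)) + 1)
      (by positivity) ?_
    · intro y
      simp_rw [hN, h1, h2, h3]
      have cu : ContDiff ℝ 1 (fun x : V × W × Z => (x.1 : 𝒱)) :=
        V.subtypeL.contDiff.comp contDiff_fst
      have cb : ContDiff ℝ 1 (fun x : V × W × Z => (x.2.1 : 𝒲)) :=
        W.subtypeL.contDiff.comp (contDiff_fst.comp contDiff_snd)
      have cT : ContDiff ℝ 1 (fun x : V × W × Z => x.2.2) := contDiff_snd.comp contDiff_snd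
      have t1 := aux_bil aV cu (contDiff_const (c := (y.1 : 𝒱)))
      have t2 := aux_bil (c₁.compr₂ (LinearMap.applyₗ (y.1 : 𝒱))) cu cu
      have t3 := aux_bil (c₂ (y.1 : 𝒱)) cb cb
      have t4 := aux_bil G cT (contDiff_const (c := (y.1 : 𝒱)))
      have t5 := aux_bil aW cb (contDiff_const (c := (y.2.1 : 𝒲)))
      have t6 := aux_bil (c₂.compr₂ (LinearMap.applyₗ (y.2.1 : 𝒲))) cu cb
      have t7 := aux_bil aZ cT (contDiff_const (c := y.2.2))
      have t8 := aux_bil (c₃.compr₂ (LinearMap.applyₗ y.2.2)) cu cT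
      exact ((((t1.add t2).add t3).add t4).sub contDiff_const).add
        (((t5.sub t6).sub contDiff_const).add (contDiff_const.mul ((t7.add t8).sub contDiff_const)))
    · intro x hr
      obtain ⟨u, b, T⟩ := x
      rw [hN, h1, h2, h3]
      simp only
      rw [hc₁_skew, hc₃_skew]
      have hnorm : ‖((u, b, T) : V × W × Z)‖ = max ‖u‖ (max ‖b‖ ‖T‖) := rfl
      refine aux_coer (u := ‖(u : 𝒱)‖) (b := ‖(b : 𝒲)‖) (t := ‖T‖) (g := G T u) hp hq hγ
        (norm_nonneg f₁) (norm_nonneg f₂)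
        (mul_nonneg hl.le (norm_nonneg f₃)) (norm_nonneg _) (norm_nonneg _) (norm_nonneg _)
        (m := ‖((u, b, T) : V × W × Z)‖)
        (hnorm ▸ le_max_left _ _) (hnorm ▸ (le_max_left _ _).trans (le_max_right _ _))
        (hnorm ▸ (le_max_right _ _).trans (le_max_right _ _)) ?_ hr
        ((neg_le_abs _).trans (hG_bound T u)) ?_
      · rw [hnorm]
        rcases max_choice ‖u‖ (max ‖b‖ ‖T‖) with h | h
        · exact Or.inl h
        · rw [h]
          rcases max_choice ‖b‖ ‖T‖ with h | h
          · exact Or.inr (Or.inl h)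
          · exact Or.inr (Or.inr h)
      · have k1 := haV_coer u
        have k2 := haW_coer b
        have k3 := mul_le_mul_of_nonneg_left (haZ_coer T) hl.le
        have k4 := (le_abs_self _).trans (f₁.le_opNorm u)
        have k5 := (le_abs_self _).trans (f₂.le_opNorm b)
        have k6 := mul_le_mul_of_nonneg_left ((le_abs_self _).trans (f₃.le_opNorm T)) hl.le
        have k7 : l * ((Pr * Re)⁻¹ * ‖T‖ ^ 2) = γ ^ 2 / p * ‖T‖ ^ 2 := by
          simp only [l]; field_simp
        rw [k7] at k3
        simp only [p, q] at k1 k2 k3 ⊢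
        linarith

  · obtain ⟨x, hx⟩ := hex
    obtain ⟨u, b, T⟩ := x
    have hx' : ∀ y : V × W × Z, ℓ₁ u b T y.1 + (ℓ₂ u b y.2.1 + l * ℓ₃ u T y.2.2) = 0 := fun y => by
      rw [← hN (u, b, T) y, hx]; rfl
    obtain ⟨P, hP⟩ := aux_pressure b₁ (-ℓ₁ u b T) (fun v hv => by
      have := hx' (⟨v, LinearMap.mem_ker.2 (LinearMap.ext hv)⟩, 0, 0)
      simpa using this)
    obtain ⟨S, hS⟩ := aux_pressure b₂ (-ℓ₂ u b) (fun v hv => by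
      have := hx' (0, ⟨v, LinearMap.mem_ker.2 (LinearMap.ext hv)⟩, 0)
      simpa using this)
    refine ⟨(u, b, T, P, S), ?_, ?_, ?_, ?_⟩
    · intro v w
      have e1 := hP v
      have e2 := hS w
      rw [LinearMap.neg_apply, h1] at e1
      rw [LinearMap.neg_apply, h2] at e2
      simp only
      linarith
    · intro q'
      simp only
      rw [LinearMap.mem_ker.1 u.2]; rfl
    · intro q'
      simp only
      rw [LinearMap.mem_ker.1 b.2]; rfl
    · intro z
      have := hx' (0, 0, z)
      simp only [ZeroMemClass.coe_zero, map_zero, zero_add] at this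
      rw [h3] at this
      have := (mul_eq_zero.1 this).resolve_left hl.ne'
      simp only
      linarith

/-- Abstract finite-dimensional version of Theorem 4.1: the full HDG system
admits at least one solution, and under the smallness condition (with the dual
norms of `f₁`, `f₂`, `f₃` taken over the kernels of `b₁`, `b₂` and over `Z`)
the solution is unique. -/
theorem full_HDG_existence_and_uniqueness
    {𝒱 𝒲 Z Q R : Type*}
    [NormedAddCommGroup 𝒱] [InnerProductSpace ℝ 𝒱] [FiniteDimensional ℝ 𝒱]
    [NormedAddCommGroup 𝒲] [InnerProductSpace ℝ 𝒲] [FiniteDimensional ℝ 𝒲]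
    [NormedAddCommGroup Z] [InnerProductSpace ℝ Z] [FiniteDimensional ℝ Z]
    [NormedAddCommGroup Q] [NormedSpace ℝ Q] [FiniteDimensional ℝ Q]
    [NormedAddCommGroup R] [NormedSpace ℝ R] [FiniteDimensional ℝ R]
    (Ha Rm Pr Re γ ζ : ℝ)
    (hHa : 0 < Ha) (hRm : 0 < Rm) (hPr : 0 < Pr) (hRe : 0 < Re) (hγ : 0 < γ)
    (hζ : ζ = max (max Ha Rm) (Ha * Pr * Re * γ))
    (b₁ : 𝒱 →ₗ[ℝ] Q →ₗ[ℝ] ℝ) (b₂ : 𝒲 →ₗ[ℝ] R →ₗ[ℝ] ℝ)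
    (β₁ β₂ : ℝ) (hβ₁ : 0 < β₁) (hβ₂ : 0 < β₂)
    (hinfsup₁ : ∀ q : Q,
      β₁ * ‖q‖ ≤ sSup {r : ℝ | ∃ v : 𝒱, v ≠ 0 ∧ r = b₁ v q / ‖v‖})
    (hinfsup₂ : ∀ θ : R,
      β₂ * ‖θ‖ ≤ sSup {r : ℝ | ∃ w : 𝒲, w ≠ 0 ∧ r = b₂ w θ / ‖w‖})
    (aV : 𝒱 →ₗ[ℝ] 𝒱 →ₗ[ℝ] ℝ) (aW : 𝒲 →ₗ[ℝ] 𝒲 →ₗ[ℝ] ℝ) (aZ : Z →ₗ[ℝ] Z →ₗ[ℝ] ℝ)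
    (haV_symm : ∀ v₁ v₂ : 𝒱, aV v₁ v₂ = aV v₂ v₁)
    (haW_symm : ∀ w₁ w₂ : 𝒲, aW w₁ w₂ = aW w₂ w₁)
    (haZ_symm : ∀ z₁ z₂ : Z, aZ z₁ z₂ = aZ z₂ z₁)
    (haV_coer : ∀ v : 𝒱, Ha⁻¹ ^ 2 * ‖v‖ ^ 2 ≤ aV v v)
    (haW_coer : ∀ w : 𝒲, Rm⁻¹ ^ 2 * ‖w‖ ^ 2 ≤ aW w w)
    (haZ_coer : ∀ z : Z, (Pr * Re)⁻¹ * ‖z‖ ^ 2 ≤ aZ z z)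
    (M₁ M₂ M₃ : ℝ) (hM₁ : 0 ≤ M₁) (hM₂ : 0 ≤ M₂) (hM₃ : 0 ≤ M₃)
    (c₁ : 𝒱 →ₗ[ℝ] 𝒱 →ₗ[ℝ] 𝒱 →ₗ[ℝ] ℝ)
    (c₂ : 𝒱 →ₗ[ℝ] 𝒲 →ₗ[ℝ] 𝒲 →ₗ[ℝ] ℝ)
    (c₃ : 𝒱 →ₗ[ℝ] Z →ₗ[ℝ] Z →ₗ[ℝ] ℝ)
    (hc₁_bound : ∀ (φ u v : 𝒱), |c₁ φ u v| ≤ M₁ * ‖φ‖ * ‖u‖ * ‖v‖)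
    (hc₂_bound : ∀ (v : 𝒱) (B w : 𝒲), |c₂ v B w| ≤ M₂ * ‖v‖ * ‖B‖ * ‖w‖)
    (hc₃_bound : ∀ (u : 𝒱) (T z : Z), |c₃ u T z| ≤ M₃ * ‖u‖ * ‖T‖ * ‖z‖)
    (hc₁_skew : ∀ (φ v : 𝒱), c₁ φ v v = 0)
    (hc₃_skew : ∀ (u : 𝒱) (z : Z), c₃ u z z = 0)
    (G : Z →ₗ[ℝ] 𝒱 →ₗ[ℝ] ℝ)
    (hG_bound : ∀ (T : Z) (v : 𝒱), |G T v| ≤ γ * ‖T‖ * ‖v‖)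
    (f₁ : 𝒱 →L[ℝ] ℝ) (f₂ : 𝒲 →L[ℝ] ℝ) (f₃ : Z →L[ℝ] ℝ)
    (nf₁ nf₂ nf₃ : ℝ)
    (hnf₁ : nf₁ = sSup {r : ℝ |
      ∃ v : 𝒱, (∀ q : Q, b₁ v q = 0) ∧ v ≠ 0 ∧ r = f₁ v / ‖v‖})
    (hnf₂ : nf₂ = sSup {r : ℝ |
      ∃ w : 𝒲, (∀ θ : R, b₂ w θ = 0) ∧ w ≠ 0 ∧ r = f₂ w / ‖w‖})
    (hnf₃ : nf₃ = sSup {r : ℝ | ∃ z : Z, z ≠ 0 ∧ r = f₃ z / ‖z‖}) :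
    (∃ ubtpr : 𝒱 × 𝒲 × Z × Q × R,
      (∀ (v : 𝒱) (w : 𝒲),
        aV ubtpr.1 v + aW ubtpr.2.1 w + b₁ v ubtpr.2.2.2.1 + b₂ w ubtpr.2.2.2.2
            + c₁ ubtpr.1 ubtpr.1 v + c₂ v ubtpr.2.1 ubtpr.2.1
            - c₂ ubtpr.1 ubtpr.2.1 w
          = f₁ v + f₂ w - G ubtpr.2.2.1 v) ∧
      (∀ q : Q, b₁ ubtpr.1 q = 0) ∧
      (∀ θ : R, b₂ ubtpr.2.1 θ = 0) ∧
      (∀ z : Z, aZ ubtpr.2.2.1 z + c₃ ubtpr.1 ubtpr.2.2.1 z = f₃ z)) ∧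
    (max (max M₁ M₂) M₃
        * (12 * ζ ^ 4 * (nf₁ + nf₂ + nf₃) + 2 * ζ ^ 2 * Pr * Re * nf₃) < 1 →
      ∃! ubtpr : 𝒱 × 𝒲 × Z × Q × R,
        (∀ (v : 𝒱) (w : 𝒲),
          aV ubtpr.1 v + aW ubtpr.2.1 w + b₁ v ubtpr.2.2.2.1
              + b₂ w ubtpr.2.2.2.2
              + c₁ ubtpr.1 ubtpr.1 v + c₂ v ubtpr.2.1 ubtpr.2.1
              - c₂ ubtpr.1 ubtpr.2.1 w
            = f₁ v + f₂ w - G ubtpr.2.2.1 v) ∧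
        (∀ q : Q, b₁ ubtpr.1 q = 0) ∧
        (∀ θ : R, b₂ ubtpr.2.1 θ = 0) ∧
        (∀ z : Z, aZ ubtpr.2.2.1 z + c₃ ubtpr.1 ubtpr.2.2.1 z = f₃ z)) := by
  classical
  have hz1 : Ha ≤ ζ := hζ ▸ (le_max_left _ _).trans (le_max_left _ _)
  have hz2 : Rm ≤ ζ := hζ ▸ (le_max_right _ _).trans (le_max_left _ _)
  have hz3 : Ha * Pr * Re * γ ≤ ζ := hζ ▸ le_max_right _ _
  obtain ⟨hn1, hf1⟩ := aux_sup f₁ (fun v => ∀ q, b₁ v q = 0) (by intro v hv q; simp [hv q]) nf₁ hnf₁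
  obtain ⟨hn2, hf2⟩ := aux_sup f₂ (fun v => ∀ q, b₂ v q = 0) (by intro v hv q; simp [hv q]) nf₂ hnf₂
  obtain ⟨hn3, hf3⟩ := aux_sup f₃ (fun _ => True) (by simp) nf₃ (by simpa using hnf₃)
  have hex := aux_exists Ha Rm Pr Re γ hHa hRm hPr hRe hγ b₁ b₂ aV aW aZ haV_coer haW_coer haZ_coer
    c₁ c₂ c₃ hc₁_skew hc₃_skew G hG_bound f₁ f₂ f₃
  refine ⟨hex, fun hsmall => ?_⟩
  obtain ⟨s₀, hs₀⟩ := hex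
  refine ⟨s₀, hs₀, ?_⟩
  rintro s hs
  obtain ⟨U1, B1, T1, P1, R1⟩ := s
  obtain ⟨U2, B2, T2, P2, R2⟩ := s₀
  simp only at hs hs₀
  obtain ⟨e1, d1, g1, t1⟩ := hs
  obtain ⟨e2, d2, g2, t2⟩ := hs₀
  set M := max (max M₁ M₂) M₃ with hM
  have hM1 : M₁ ≤ M := (le_max_left _ _).trans (le_max_left _ _)
  have hM2 : M₂ ≤ M := (le_max_right _ _).trans (le_max_left _ _)
  have hM3 : M₃ ≤ M := le_max_right _ _
  have hM0 : 0 ≤ M := hM₁.trans hM1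
  have hPR : 0 < Pr * Re := mul_pos hPr hRe
  have tbound : ∀ (U : 𝒱) (T : Z), (∀ z, aZ T z + c₃ U T z = f₃ z) → ‖T‖ ≤ Pr * Re * nf₃ := by
    intro U T h
    have h1 := h T
    rw [hc₃_skew, add_zero] at h1
    have h2 := haZ_coer T
    rw [h1] at h2
    have h3 := h2.trans (hf3 T trivial)
    exact aux_div hPR (norm_nonneg _) (by positivity) h3
  have bt1 := tbound U1 T1 t1
  have bt2 := tbound U2 T2 t2
  have ubound : ∀ (U : 𝒱) (B : 𝒲) (T : Z) (P : Q) (S : R),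
      (∀ (v : 𝒱) (w : 𝒲), aV U v + aW B w + b₁ v P + b₂ w S + c₁ U U v + c₂ v B B - c₂ U B w
        = f₁ v + f₂ w - G T v) → (∀ q, b₁ U q = 0) → (∀ q, b₂ B q = 0) →
      ‖T‖ ≤ Pr * Re * nf₃ →
      ‖U‖ ≤ ζ ^ 2 * (nf₁ + nf₂ + nf₃) ∧ ‖B‖ ≤ ζ ^ 2 * (nf₁ + nf₂ + nf₃) := by
    intro U B T P S e d g bt
    have h1 := e U B
    rw [d, g, hc₁_skew] at h1
    refine aux_real2 hHa hRm hz1 hz2 hz3 hγ hn1 hn2 hn3 (norm_nonneg _) (norm_nonneg _) bt ?_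
    have k1 := haV_coer U
    have k2 := haW_coer B
    have k3 := hf1 U d
    have k4 := hf2 B g
    have k5 := (neg_le_abs _).trans (hG_bound T U)
    linarith
  obtain ⟨bu1, bb1⟩ := ubound U1 B1 T1 P1 R1 e1 d1 g1 bt1
  obtain ⟨bu2, bb2⟩ := ubound U2 B2 T2 P2 R2 e2 d2 g2 bt2
  have btd : ‖T1 - T2‖ ≤ (Pr * Re) ^ 2 * M * nf₃ * ‖U1 - U2‖ := by
    have h1 := t1 (T1 - T2)
    have h2 := t2 (T1 - T2)
    have h3 : aZ (T1 - T2) (T1 - T2) = - c₃ (U1 - U2) T2 (T1 - T2) := by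
      have h4 := hc₃_skew U1 (T1 - T2)
      simp only [map_sub, LinearMap.sub_apply] at h1 h2 h4 ⊢
      linarith
    have h4 := haZ_coer (T1 - T2)
    rw [h3] at h4
    have h5 := h4.trans ((neg_le_abs _).trans (hc₃_bound _ _ _))
    have h6 := aux_div hPR (norm_nonneg _) (by positivity) h5
    calc _ ≤ _ := h6
      _ ≤ Pr * Re * (M * ‖U1 - U2‖ * (Pr * Re * nf₃)) := by gcongr
      _ = _ := by ring
  obtain ⟨du, db⟩ := aux_real3 (U := ‖U2‖) (B := ‖B1‖) (U' := ‖U1‖) hHa hRm hPr hRe hz1 hz2 hz3 hγ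
    (add_nonneg (add_nonneg hn1 hn2) hn3) hn3
    hM0 (norm_nonneg (U1 - U2)) (norm_nonneg (B1 - B2)) bu2 bb1 bu1 btd hsmall (by
      have h1 := e1 (U1 - U2) (B1 - B2)
      have h2 := e2 (U1 - U2) (B1 - B2)
      have h3 : aV (U1 - U2) (U1 - U2) + aW (B1 - B2) (B1 - B2) =
          - c₁ (U1 - U2) U2 (U1 - U2) - c₂ (U1 - U2) (B1 - B2) B1 + c₂ U1 (B1 - B2) (B1 - B2)
            - G (T1 - T2) (U1 - U2) := by
        have h4 := hc₁_skew U1 (U1 - U2)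
        simp only [map_sub, LinearMap.sub_apply, d1, d2, g1, g2] at h1 h2 h4 ⊢
        linarith
      have k1 := haV_coer (U1 - U2)
      have k2 := haW_coer (B1 - B2)
      have k3 : - c₁ (U1 - U2) U2 (U1 - U2) ≤ M * ‖U1 - U2‖ * ‖U2‖ * ‖U1 - U2‖ :=
        ((neg_le_abs _).trans (hc₁_bound _ _ _)).trans (by gcongr)
      have k4 : - c₂ (U1 - U2) (B1 - B2) B1 ≤ M * ‖U1 - U2‖ * ‖B1 - B2‖ * ‖B1‖ :=
        ((neg_le_abs _).trans (hc₂_bound _ _ _)).trans (by gcongr)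
      have k5 : c₂ U1 (B1 - B2) (B1 - B2) ≤ M * ‖U1‖ * ‖B1 - B2‖ * ‖B1 - B2‖ :=
        ((le_abs_self _).trans (hc₂_bound _ _ _)).trans (by gcongr)
      have k6 := (neg_le_abs _).trans (hG_bound (T1 - T2) (U1 - U2))
      linarith)
  have hU : U1 = U2 := sub_eq_zero.1 (norm_eq_zero.1 du)
  have hB : B1 = B2 := sub_eq_zero.1 (norm_eq_zero.1 db)
  rw [du, mul_zero] at btd
  have hT : T1 = T2 := sub_eq_zero.1 (norm_eq_zero.1 (le_antisymm btd (norm_nonneg _)))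
  subst hU hB hT
  have hP : P1 = P2 := by
    refine aux_inj b₁ hβ₁ hinfsup₁ P1 P2 fun v => ?_
    have h1 := e1 v 0
    have h2 := e2 v 0
    simp only [map_zero, LinearMap.zero_apply] at h1 h2
    linarith
  have hRR : R1 = R2 := by
    refine aux_inj b₂ hβ₂ hinfsup₂ R1 R2 fun w => ?_
    have h1 := e1 0 w
    have h2 := e2 0 w
    simp only [map_zero, LinearMap.zero_apply] at h1 h2
    linarith
  rw [hP, hRR]
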